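/- Let Φ be a positive linear map from n×n to m×m complex matrices, let g : ℝ → ℝ be operator monotone decreasing on (0,∞), and let A, B be positive definite n×n complex matrices with s·A ≤ B ≤ t·A for some scalars 0 < s ≤ t with s·t ≤ 1. Then Φ(g(A ! B)) ≤ ((√s+√t)/(2√(st)))²·(Φ(g(A)) + Φ(g(B)))/2. -/

import Mathlib

open Matrix ComplexOrder

/-- Loewner order: `A ≤ B` iff `B - A` is positive semidefinite. -/
def LoewnerLE {n : Type} [Fintype n] (A B : Matrix n n ℂ) : Prop := (B - A).PosSemidef

/-- The positive square root of a (Hermitian) matrix, via the continuous functional calculus. -/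
noncomputable def msqrt {n : Type} [Fintype n] [DecidableEq n] (A : Matrix n n ℂ) :
    Matrix n n ℂ := cfc Real.sqrt A

/-- The arithmetic mean `A ∇ B = (A + B)/2`. -/
noncomputable def amean {n : Type} [Fintype n] [DecidableEq n] (A B : Matrix n n ℂ) :
    Matrix n n ℂ := (2 : ℝ)⁻¹ • (A + B)

/-- The harmonic mean `A ! B = ((A⁻¹ + B⁻¹)/2)⁻¹`. -/
noncomputable def hmean {n : Type} [Fintype n] [DecidableEq n] (A B : Matrix n n ℂ) :
    Matrix n n ℂ := ((2 : ℝ)⁻¹ • (A⁻¹ + B⁻¹))⁻¹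

/-- The geometric mean `A ♯ B = A^(1/2) (A^(-1/2) B A^(-1/2))^(1/2) A^(1/2)`. -/
noncomputable def gmean {n : Type} [Fintype n] [DecidableEq n] (A B : Matrix n n ℂ) :
    Matrix n n ℂ := msqrt A * msqrt ((msqrt A)⁻¹ * B * (msqrt A)⁻¹) * msqrt A

/-- `f : ℝ → ℝ` is operator monotone on `[0,∞)`: it is continuous and nonnegative on `[0,∞)`
and monotone on positive-semidefinite complex matrices of every finite size, with `f` applied
via the continuous functional calculus. -/
def OpMonotone (f : ℝ → ℝ) : Prop :=
  ContinuousOn f (Set.Ici 0) ∧ (∀ x : ℝ, 0 ≤ x → 0 ≤ f x) ∧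
    ∀ (k : Type) [Fintype k] [DecidableEq k] (X Y : Matrix k k ℂ),
      X.PosSemidef → LoewnerLE X Y → LoewnerLE (cfc f X) (cfc f Y)

/-- `g : ℝ → ℝ` is operator monotone decreasing on `(0,∞)`: it is continuous and nonnegative on
`(0,∞)` and antitone on positive-definite complex matrices of every finite size, with `g` applied
via the continuous functional calculus. -/
def OpAntitone (g : ℝ → ℝ) : Prop :=
  ContinuousOn g (Set.Ioi 0) ∧ (∀ x : ℝ, 0 < x → 0 ≤ g x) ∧
    ∀ (k : Type) [Fintype k] [DecidableEq k] (X Y : Matrix k k ℂ),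
      X.PosDef → Y.PosDef → LoewnerLE X Y → LoewnerLE (cfc g Y) (cfc g X)

/-!
Everything needed about `g` comes from one inequality: if `V` is an isometry and `X` is positive
definite, then `V * g(Vᴴ X V) * Vᴴ ≤ g(X)`. Compressing both sides by `V` gives Jensen's inequality
`g(Vᴴ X V) ≤ Vᴴ * g(X) * V`, hence operator convexity of `g`. Comparing instead the first diagonal
blocks, for the isometry with blocks `√a` and `√b` and `X = A ⊕ B`, gives
`a * g(a A + b B) ≤ g(A)`, and from this `g(X) ≤ d * g(d X)` for `d ≥ 1`.

Since `s t ≤ 1`, both `s A ≤ B` and `s B ≤ A`, and the Kantorovich inequality bounds the harmonic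
mean from below by `d⁻¹` times the arithmetic mean `A ∇ B`, with `d = (1 + s)² / (4 s)`. Therefore
`g(A ! B) ≤ g(d⁻¹ (A ∇ B)) ≤ d g(A ∇ B) ≤ d (g(A) ∇ g(B))`, and `d` is at most the constant of the
theorem.
-/

open scoped MatrixOrder Matrix.Norms.L2Operator

section FunctionalCalculus

variable {𝕜 k l : Type*} [RCLike 𝕜] [Fintype k] [DecidableEq k] [Fintype l] [DecidableEq l]

theorem aeval_mul_eq_mul_aeval {R S : Type*} [CommSemiring R] [Semiring S] [Algebra R S]
    {X : Matrix k k S} {Y : Matrix l l S} {V : Matrix k l S} (h : X * V = V * Y)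
    (p : Polynomial R) : Polynomial.aeval X p * V = V * Polynomial.aeval Y p := by
  have hpow (i : ℕ) : X ^ i * V = V * Y ^ i := by
    induction i with
    | zero => simp
    | succ i ih => rw [pow_succ, pow_succ, Matrix.mul_assoc, h, ← Matrix.mul_assoc, ih,
        Matrix.mul_assoc]
  simp only [Polynomial.aeval_eq_sum_range, Matrix.sum_mul, Matrix.mul_sum, Matrix.smul_mul,
    Matrix.mul_smul, hpow]

theorem cfc_eq_aeval {X : Matrix k k 𝕜} (hX : X.IsHermitian) {g : ℝ → ℝ} {p : Polynomial ℝ}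
    (hp : ∀ x ∈ spectrum ℝ X, p.eval x = g x) : cfc g X = Polynomial.aeval X p := by
  rw [← cfc_polynomial p X hX.isSelfAdjoint]
  exact cfc_congr fun x hx => (hp x hx).symm

theorem cfc_mul_eq_mul_cfc {X : Matrix k k 𝕜} {Y : Matrix l l 𝕜} (hX : X.IsHermitian)
    (hY : Y.IsHermitian) {V : Matrix k l 𝕜} (h : X * V = V * Y) (g : ℝ → ℝ) :
    cfc g X * V = V * cfc g Y := by
  have hfin : (spectrum ℝ X ∪ spectrum ℝ Y).Finite :=
    X.finite_real_spectrum.union Y.finite_real_spectrum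
  set p : Polynomial ℝ := Lagrange.interpolate hfin.toFinset id g
  have hp (x : ℝ) (hx : x ∈ spectrum ℝ X ∪ spectrum ℝ Y) : p.eval x = g x :=
    Lagrange.eval_interpolate_at_node g Function.injective_id.injOn (hfin.mem_toFinset.2 hx)
  rw [cfc_eq_aeval hX fun x hx => hp x (.inl hx), cfc_eq_aeval hY fun x hx => hp x (.inr hx)]
  exact aeval_mul_eq_mul_aeval h p

theorem cfc_fromBlocks_diagonal {X : Matrix k k 𝕜} {Y : Matrix l l 𝕜} (hX : X.IsHermitian)
    (hY : Y.IsHermitian) (g : ℝ → ℝ) :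
    cfc g (fromBlocks X 0 0 Y) = fromBlocks (cfc g X) 0 0 (cfc g Y) := by
  have hXY : (fromBlocks X 0 0 Y).IsHermitian := hX.fromBlocks conjTranspose_zero hY
  have hinl : cfc g (fromBlocks X 0 0 Y) * (fromRows 1 0 : Matrix (k ⊕ l) k 𝕜) =
      (fromRows 1 0 : Matrix (k ⊕ l) k 𝕜) * cfc g X :=
    cfc_mul_eq_mul_cfc hXY hX (by simp [fromBlocks_mul_fromRows]) g
  have hinr : cfc g (fromBlocks X 0 0 Y) * (fromRows 0 1 : Matrix (k ⊕ l) l 𝕜) =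
      (fromRows 0 1 : Matrix (k ⊕ l) l 𝕜) * cfc g Y :=
    cfc_mul_eq_mul_cfc hXY hY (by simp [fromBlocks_mul_fromRows]) g
  rw [← fromBlocks_toBlocks (cfc g (fromBlocks X 0 0 Y))] at hinl hinr ⊢
  simp only [fromBlocks_mul_fromRows, fromRows_mul, Matrix.mul_one, Matrix.mul_zero,
    Matrix.one_mul, Matrix.zero_mul, add_zero, zero_add, fromRows_inj.eq_iff] at hinl hinr
  rw [hinl.1, hinl.2, hinr.1, hinr.2]

end FunctionalCalculus

section PosDef

variable {𝕜 k l : Type*} [RCLike 𝕜]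

theorem posDef_fromBlocks_diagonal [Finite k] [Finite l] {X : Matrix k k 𝕜} {Y : Matrix l l 𝕜}
    (hX : X.PosDef) (hY : Y.PosDef) : (fromBlocks X 0 0 Y).PosDef := by
  classical
  have := Fintype.ofFinite k
  have := Fintype.ofFinite l
  have := hX.isUnit.invertible
  have hpsd : (fromBlocks X 0 0 Y).PosSemidef := by
    simpa using (PosDef.fromBlocks₁₁ (A := X) 0 Y hX).2 (by simpa using hY.posSemidef)
  exact hpsd.posDef_iff_isUnit.2 (isUnit_fromBlocks_zero₂₁.2 ⟨hX.isUnit, hY.isUnit⟩)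

theorem posDef_conjTranspose_mul_mul_of_isometry [Finite k] [DecidableEq k] [Fintype l]
    {X : Matrix l l 𝕜} (hX : X.PosDef) {V : Matrix l k 𝕜} (hV : Vᴴ * V = 1) :
    (Vᴴ * X * V).PosDef := by
  have := Fintype.ofFinite k
  exact hX.conjTranspose_mul_mul_same <|
    Function.LeftInverse.injective (g := Vᴴ.mulVec) fun x => by simp [hV]

theorem toBlocks₁₁_mono : Monotone (toBlocks₁₁ : Matrix (k ⊕ l) (k ⊕ l) 𝕜 → Matrix k k 𝕜) :=
  fun _ _ h => le_iff.2 <| (le_iff.1 h).submatrix Sum.inl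

theorem convex_setOf_posDef : Convex ℝ {X : Matrix k k 𝕜 | X.PosDef} := by
  intro X hX Y hY a b ha hb hab
  rcases ha.eq_or_lt with rfl | ha
  · simpa [show b = 1 by linarith] using hY
  · exact (hX.smul ha).add_posSemidef (hY.posSemidef.smul hb)

theorem spectrum_subset_Ioi_of_posDef [Fintype k] [DecidableEq k] {X : Matrix k k 𝕜}
    (hX : X.PosDef) : spectrum ℝ X ⊆ Set.Ioi 0 :=
  fun _ hx => (isStrictlyPositive_iff_posDef.2 hX).spectrum_pos hx

end PosDef

theorem mul_mul_conjTranspose_le_of_mul_eq_mul {𝕜 k l : Type*} [RCLike 𝕜] [Fintype k]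
    [DecidableEq k] [Fintype l] {G : Matrix l l 𝕜} {D : Matrix k k 𝕜} {V : Matrix l k 𝕜}
    (hG : G.PosSemidef) (hV : Vᴴ * V = 1) (h : G * V = V * D) : V * D * Vᴴ ≤ G := by
  classical
  have hD : D = Vᴴ * G * V := by rw [Matrix.mul_assoc, h, ← Matrix.mul_assoc, hV, Matrix.one_mul]
  have hDH : Dᴴ = D := by simp [hD, hG.1.eq, Matrix.mul_assoc]
  have hVG : Vᴴ * G = D * Vᴴ := by simpa [hG.1.eq, hDH] using congrArg conjTranspose h
  have hQV : (1 - V * Vᴴ) * V = 0 := by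
    rw [Matrix.sub_mul, Matrix.mul_assoc, hV, Matrix.one_mul, Matrix.mul_one, sub_self]
  have hcorner : (1 - V * Vᴴ)ᴴ * G * (1 - V * Vᴴ) = G - V * D * Vᴴ := by
    have hright : G * (1 - V * Vᴴ) = G - V * D * Vᴴ := by
      rw [Matrix.mul_sub, Matrix.mul_one, ← Matrix.mul_assoc, h]
    have hleft : (1 - V * Vᴴ) * G = G - V * D * Vᴴ := by
      rw [Matrix.sub_mul, Matrix.one_mul, Matrix.mul_assoc, hVG, Matrix.mul_assoc]
    have hvanish : (1 - V * Vᴴ) * (V * D * Vᴴ) = 0 := by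
      rw [← Matrix.mul_assoc, ← Matrix.mul_assoc, hQV, Matrix.zero_mul, Matrix.zero_mul]
    rw [conjTranspose_sub, conjTranspose_one, conjTranspose_mul, conjTranspose_conjTranspose,
      Matrix.mul_assoc, hright, Matrix.mul_sub, hleft, hvanish, sub_zero]
  rw [le_iff, ← hcorner]
  exact hG.conjTranspose_mul_mul_same _

theorem le_smul_conjugate_add_smul_conjugate {A : Type*} [Ring A] [StarRing A] [PartialOrder A]
    [StarOrderedRing A] [Algebra ℝ A] [StarModule ℝ A] [IsOrderedModule ℝ A] {x p q : A}
    (hx : 0 ≤ x) (hpq : p + q = 1) {ε : ℝ} (hε : 0 < ε) :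
    x ≤ (1 + ε) • (star p * x * p) + (1 + ε⁻¹) • (star q * x * q) := by
  have hsq : 0 ≤ ε⁻¹ • (star (ε • p - q) * x * (ε • p - q)) :=
    smul_nonneg (inv_nonneg.2 hε.le) (star_left_conjugate_nonneg hx _)
  have hexpand : star (p + q) * x * (p + q) = x := by simp [hpq]
  rw [← sub_nonneg]
  nth_rewrite 3 [← hexpand]
  convert! hsq using 1
  simp only [star_add, star_sub, star_smul, star_trivial, add_mul, mul_add, sub_mul, mul_sub,
    smul_mul_assoc, mul_smul_comm]
  match_scalars <;> field_simp <;> ring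

section SqrtIsometry

variable (𝕜 k : Type*) [RCLike 𝕜] [DecidableEq k]

/-- The block column with entries `√a • 1` and `√b • 1`. When `a + b = 1` it is the isometry that
compresses a block diagonal matrix to the convex combination of its blocks with weights `a`, `b`. -/
noncomputable def sqrtIsometry (a b : ℝ) : Matrix (k ⊕ k) k 𝕜 :=
  fromRows (√a • 1) (√b • 1)

theorem conjTranspose_sqrtIsometry (a b : ℝ) :
    (sqrtIsometry 𝕜 k a b)ᴴ = fromCols (√a • 1) (√b • 1) := by
  simp [sqrtIsometry, conjTranspose_fromRows_eq_fromCols_conjTranspose]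

variable {𝕜 k} [Fintype k] {a b : ℝ}

theorem conjTranspose_sqrtIsometry_mul_fromBlocks_mul (ha : 0 ≤ a) (hb : 0 ≤ b)
    (A B : Matrix k k 𝕜) :
    (sqrtIsometry 𝕜 k a b)ᴴ * fromBlocks A 0 0 B * sqrtIsometry 𝕜 k a b = a • A + b • B := by
  rw [conjTranspose_sqrtIsometry, fromCols_mul_fromBlocks, sqrtIsometry, fromCols_mul_fromRows]
  simp [smul_smul, Real.mul_self_sqrt, ha, hb]

variable (𝕜 k) in
theorem conjTranspose_sqrtIsometry_mul_self (ha : 0 ≤ a) (hb : 0 ≤ b) (hab : a + b = 1) :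
    (sqrtIsometry 𝕜 k a b)ᴴ * sqrtIsometry 𝕜 k a b = 1 := by
  simpa [← add_smul, hab] using
    conjTranspose_sqrtIsometry_mul_fromBlocks_mul ha hb (1 : Matrix k k 𝕜) 1

theorem toBlocks₁₁_sqrtIsometry_mul_mul_conjTranspose (ha : 0 ≤ a) (b : ℝ) (X : Matrix k k 𝕜) :
    (sqrtIsometry 𝕜 k a b * X * (sqrtIsometry 𝕜 k a b)ᴴ).toBlocks₁₁ = a • X := by
  rw [conjTranspose_sqrtIsometry, sqrtIsometry, fromRows_mul, fromRows_mul_fromCols]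
  simp [smul_smul, Real.mul_self_sqrt, ha]

end SqrtIsometry

namespace OpAntitone

variable {g : ℝ → ℝ} {k l : Type} [Fintype k] [DecidableEq k] [Fintype l] [DecidableEq l]

theorem antitoneOn_cfc (hg : OpAntitone g) :
    AntitoneOn (cfc g) {X : Matrix k k ℂ | X.PosDef} :=
  fun X hX Y hY hXY => hg.2.2 k X Y hX hY hXY

theorem cfc_nonneg (hg : OpAntitone g) {X : Matrix k k ℂ} (hX : X.PosDef) : 0 ≤ cfc g X :=
  _root_.cfc_nonneg fun x hx => hg.2.1 x (spectrum_subset_Ioi_of_posDef hX hx)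

theorem continuousOn_cfc (hg : OpAntitone g) :
    ContinuousOn (cfc g) {X : Matrix k k ℂ | X.PosDef} :=
  continuousOn_id.cfc_of_mem_nhdsSet (s := Set.Ioi 0) g
    (isOpen_Ioi.mem_nhdsSet.2 <| Set.iUnion₂_subset fun _ => spectrum_subset_Ioi_of_posDef)
    (fun _ hX => hX.1.isSelfAdjoint) hg.1

-- The off-diagonal blocks of `X` relative to the range of `V` are absorbed into its diagonal
-- blocks: a factor `1 + ε` on the first suffices, and the large factor this puts on the second is
-- harmless because `g` is nonnegative there.
theorem mul_cfc_smul_mul_conjTranspose_le (hg : OpAntitone g) {X : Matrix l l ℂ} (hX : X.PosDef)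
    {V : Matrix l k ℂ} (hV : Vᴴ * V = 1) {ε : ℝ} (hε : 0 < ε) :
    V * cfc g ((1 + ε) • (Vᴴ * X * V)) * Vᴴ ≤ cfc g X := by
  set P := V * Vᴴ with hP
  set Q := 1 - P with hQ
  have hPH : Pᴴ = P := by simp [hP]
  have hPV : P * V = V := by rw [hP, Matrix.mul_assoc, hV, Matrix.mul_one]
  have hQV : Q * V = 0 := by rw [hQ, Matrix.sub_mul, hPV, Matrix.one_mul, sub_self]
  set C := (1 + ε) • (Vᴴ * X * V) with hC
  set Y := (1 + ε) • (Pᴴ * X * P) + (1 + ε⁻¹) • (Qᴴ * X * Q) with hYdef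
  have hXY : X ≤ Y := le_smul_conjugate_add_smul_conjugate hX.posSemidef.nonneg
    (add_sub_cancel P 1) hε
  have hY : Y.PosDef := by simpa using hX.add_posSemidef (le_iff.1 hXY)
  have hCpd : C.PosDef := (posDef_conjTranspose_mul_mul_of_isometry hX hV).smul (by positivity)
  have hYV : Y * V = V * C := by
    simp only [hYdef, hC, hPH, Matrix.add_mul, Matrix.smul_mul, Matrix.mul_smul, Matrix.mul_assoc,
      hPV, hQV, Matrix.mul_zero, smul_zero, add_zero]
    rw [hP, Matrix.mul_assoc]
  calc V * cfc g C * Vᴴ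
      ≤ cfc g Y := mul_mul_conjTranspose_le_of_mul_eq_mul
        (nonneg_iff_posSemidef.1 (hg.cfc_nonneg hY)) hV (cfc_mul_eq_mul_cfc hY.1 hCpd.1 hYV g)
    _ ≤ cfc g X := hg.antitoneOn_cfc hX hY hXY

theorem mul_cfc_mul_conjTranspose_le (hg : OpAntitone g) {X : Matrix l l ℂ} (hX : X.PosDef)
    {V : Matrix l k ℂ} (hV : Vᴴ * V = 1) : V * cfc g (Vᴴ * X * V) * Vᴴ ≤ cfc g X := by
  have hmaps : Set.MapsTo (fun ε : ℝ => (1 + ε) • (Vᴴ * X * V)) (Set.Ici 0)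
      {C : Matrix k k ℂ | C.PosDef} := fun ε hε =>
    (posDef_conjTranspose_mul_mul_of_isometry hX hV).smul (by linarith [Set.mem_Ici.1 hε])
  have hcont : ContinuousOn (fun ε : ℝ => V * cfc g ((1 + ε) • (Vᴴ * X * V)) * Vᴴ)
      (Set.Ici 0) := by
    have := hg.continuousOn_cfc.comp (by fun_prop) hmaps
    fun_prop
  have hclosure : (0 : ℝ) ∈ closure (Set.Ioi 0) := by simp
  simpa using ((hcont 0 Set.self_mem_Ici).mono Set.Ioi_subset_Ici_self).closure_le hclosure
    continuousWithinAt_const fun ε hε => hg.mul_cfc_smul_mul_conjTranspose_le hX hV hε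

theorem cfc_conjTranspose_mul_mul_le (hg : OpAntitone g) {X : Matrix l l ℂ} (hX : X.PosDef)
    {V : Matrix l k ℂ} (hV : Vᴴ * V = 1) : cfc g (Vᴴ * X * V) ≤ Vᴴ * cfc g X * V := by
  have h := (le_iff.1 (hg.mul_cfc_mul_conjTranspose_le hX hV)).conjTranspose_mul_mul_same V
  have hcancel : Vᴴ * (V * cfc g (Vᴴ * X * V) * Vᴴ) * V = cfc g (Vᴴ * X * V) := by
    simp only [← Matrix.mul_assoc, hV, Matrix.one_mul]
    rw [Matrix.mul_assoc, hV, Matrix.mul_one]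
  rwa [Matrix.mul_sub, Matrix.sub_mul, hcancel, ← le_iff] at h

theorem convexOn_cfc (hg : OpAntitone g) : ConvexOn ℝ {X : Matrix k k ℂ | X.PosDef} (cfc g) := by
  refine ⟨convex_setOf_posDef, fun A hA B hB a b ha hb hab => ?_⟩
  have h := hg.cfc_conjTranspose_mul_mul_le (posDef_fromBlocks_diagonal hA hB)
    (conjTranspose_sqrtIsometry_mul_self ℂ k ha hb hab)
  rwa [cfc_fromBlocks_diagonal hA.1 hB.1, conjTranspose_sqrtIsometry_mul_fromBlocks_mul ha hb,
    conjTranspose_sqrtIsometry_mul_fromBlocks_mul ha hb] at h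

theorem smul_cfc_smul_add_smul_le (hg : OpAntitone g) {A B : Matrix k k ℂ} (hA : A.PosDef)
    (hB : B.PosDef) {a b : ℝ} (ha : 0 ≤ a) (hb : 0 ≤ b) (hab : a + b = 1) :
    a • cfc g (a • A + b • B) ≤ cfc g A := by
  have h := toBlocks₁₁_mono <| hg.mul_cfc_mul_conjTranspose_le (posDef_fromBlocks_diagonal hA hB)
    (conjTranspose_sqrtIsometry_mul_self ℂ k ha hb hab)
  rwa [cfc_fromBlocks_diagonal hA.1 hB.1, conjTranspose_sqrtIsometry_mul_fromBlocks_mul ha hb,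
    toBlocks₁₁_sqrtIsometry_mul_mul_conjTranspose ha, toBlocks_fromBlocks₁₁] at h

-- `X` is a convex combination of `d • X` and `μ • X`, in which the weight of `d • X` tends to `d⁻¹`
-- as `μ → 0`.
theorem cfc_le_smul_cfc_smul (hg : OpAntitone g) {X : Matrix k k ℂ} (hX : X.PosDef) {d : ℝ}
    (hd : 1 ≤ d) : cfc g X ≤ d • cfc g (d • X) := by
  rcases hd.eq_or_lt with rfl | hd
  · simp
  have hμ (μ : ℝ) (hμ : μ ∈ Set.Ioo 0 1) :
      (1 - μ) • cfc g X ≤ (d - μ) • cfc g (d • X) := by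
    obtain ⟨hμ0, hμ1⟩ := hμ
    have hdμ : 0 < d - μ := by linarith
    have h := hg.smul_cfc_smul_add_smul_le (hX.smul (zero_lt_one.trans hd)) (hX.smul hμ0)
      (a := (1 - μ) / (d - μ)) (b := (d - 1) / (d - μ))
      (div_nonneg (by linarith) hdμ.le) (div_nonneg (by linarith) hdμ.le) (by field_simp; ring)
    have hmix : ((1 - μ) / (d - μ)) • d • X + ((d - 1) / (d - μ)) • μ • X = X := by
      match_scalars
      field_simp
      ring
    rw [hmix] at h
    have := smul_le_smul_of_nonneg_left h hdμ.le
    rwa [smul_smul, mul_div_cancel₀ _ hdμ.ne'] at this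
  have hclosure : (0 : ℝ) ∈ closure (Set.Ioo 0 1) := by simp [closure_Ioo]
  simpa using ContinuousWithinAt.closure_le hclosure (by fun_prop) (by fun_prop) hμ

end OpAntitone

section Kantorovich

variable {𝕜 k : Type*} [RCLike 𝕜] [Fintype k] [DecidableEq k]

theorem mul_inv_mul_nonneg_of_add_eq_smul {M N W : Matrix k k 𝕜} (hM : M.PosSemidef)
    (hN : N.PosSemidef) (hW : W.PosDef) {c : ℝ} (hc : 0 < c) (hMN : M + N = c • W) :
    0 ≤ M * W⁻¹ * N := by
  have hWdet : IsUnit W.det := (isUnit_iff_isUnit_det W).1 hW.isUnit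
  have hcomm : N * W⁻¹ * M = M * W⁻¹ * N := by
    simp only [eq_sub_of_add_eq' hMN, Matrix.sub_mul, Matrix.mul_sub, Matrix.smul_mul,
      Matrix.mul_smul, mul_nonsing_inv _ hWdet, nonsing_inv_mul_cancel_right _ _ hWdet,
      Matrix.one_mul]
  have hsum : c • (M * W⁻¹ * N) =
      (W⁻¹ * M)ᴴ * N * (W⁻¹ * M) + (W⁻¹ * N)ᴴ * M * (W⁻¹ * N) := calc
    c • (M * W⁻¹ * N) = (M + N) * W⁻¹ * (M * W⁻¹ * N) := by
      rw [hMN, Matrix.smul_mul, mul_nonsing_inv _ hWdet, Matrix.smul_mul, Matrix.one_mul]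
    _ = M * W⁻¹ * (N * W⁻¹ * M) + N * W⁻¹ * (M * W⁻¹ * N) := by
      rw [hcomm, Matrix.add_mul, Matrix.add_mul]
    _ = (W⁻¹ * M)ᴴ * N * (W⁻¹ * M) + (W⁻¹ * N)ᴴ * M * (W⁻¹ * N) := by
      simp only [conjTranspose_mul, hM.1.eq, hN.1.eq, hW.inv.1.eq, Matrix.mul_assoc]
  rw [← smul_nonneg_iff_nonneg_of_pos_left hc, hsum]
  exact ((hN.conjTranspose_mul_mul_same _).add (hM.conjTranspose_mul_mul_same _)).nonneg

-- The matrix form of `0 ≤ (x - α) * (β - x)`.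
theorem mul_inv_mul_self_add_smul_le {A W : Matrix k k 𝕜} (hW : W.PosDef) {α β : ℝ}
    (hα : α • W ≤ A) (hβ : A ≤ β • W) : A * W⁻¹ * A + (α * β) • W ≤ (α + β) • A := by
  have hWdet : IsUnit W.det := (isUnit_iff_isUnit_det W).1 hW.isUnit
  have hexpand : (α + β) • A - (A * W⁻¹ * A + (α * β) • W) =
      (A - α • W) * W⁻¹ * (β • W - A) := by
    simp only [Matrix.sub_mul, Matrix.mul_sub, Matrix.smul_mul, Matrix.mul_smul,
      mul_nonsing_inv _ hWdet, nonsing_inv_mul_cancel_right _ _ hWdet, Matrix.one_mul]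
    module
  rw [← sub_nonneg, hexpand]
  rcases le_or_gt β α with hβα | hαβ
  · have hA : A = α • W :=
      (hβ.trans (smul_le_smul_of_nonneg_right hβα hW.posSemidef.nonneg)).antisymm hα
    simp [hA]
  · exact mul_inv_mul_nonneg_of_add_eq_smul (le_iff.1 hα) (le_iff.1 hβ) hW (sub_pos.2 hαβ)
      (by module)

end Kantorovich

section HarmonicMean

theorem inv_inv_add_inv_eq_sub {R k : Type*} [CommRing R] [Fintype k] [DecidableEq k]
    {A B : Matrix k k R} (hA : IsUnit A) (hB : IsUnit B) (hAB : IsUnit (A + B)) :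
    (A⁻¹ + B⁻¹)⁻¹ = A - A * (A + B)⁻¹ * A := by
  have hAdet := (isUnit_iff_isUnit_det A).1 hA
  have hBdet := (isUnit_iff_isUnit_det B).1 hB
  have hABdet := (isUnit_iff_isUnit_det (A + B)).1 hAB
  rw [inv_add_inv (iff_of_true hA hB), Matrix.mul_inv_rev, Matrix.mul_inv_rev,
    nonsing_inv_nonsing_inv B hBdet, nonsing_inv_nonsing_inv A hAdet, eq_sub_iff_add_eq',
    Matrix.mul_assoc, ← Matrix.add_mul, mul_nonsing_inv_cancel_left (A + B) A hABdet]

variable {k : Type} [Fintype k] [DecidableEq k] {A B : Matrix k k ℂ}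

theorem amean_posDef (hA : A.PosDef) (hB : B.PosDef) : (amean A B).PosDef :=
  (hA.add hB).smul (by norm_num : (0 : ℝ) < 2⁻¹)

theorem hmean_posDef (hA : A.PosDef) (hB : B.PosDef) : (hmean A B).PosDef :=
  (amean_posDef hA.inv hB.inv).inv

theorem hmean_eq_two_smul_sub (hA : A.PosDef) (hB : B.PosDef) :
    hmean A B = (2 : ℝ) • (A - A * (A + B)⁻¹ * A) := by
  have hdet : IsUnit (A⁻¹ + B⁻¹).det :=
    (isUnit_iff_isUnit_det _).1 (hA.inv.add hB.inv).isUnit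
  rw [← inv_inv_add_inv_eq_sub hA.isUnit hB.isUnit (hA.add hB).isUnit, hmean]
  refine inv_eq_right_inv ?_
  rw [smul_mul_smul_comm, mul_nonsing_inv _ hdet]
  norm_num

theorem smul_amean_le_hmean (hA : A.PosDef) (hB : B.PosDef) {s : ℝ} (hs : 0 ≤ s)
    (hAB : s • A ≤ B) (hBA : s • B ≤ A) : (4 * s / (1 + s) ^ 2) • amean A B ≤ hmean A B := by
  have hα : (s / (1 + s)) • (A + B) ≤ A := by
    rw [div_eq_inv_mul, mul_smul, inv_smul_le_iff_of_pos (by positivity), smul_add, add_smul,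
      one_smul, add_comm]
    gcongr
  have hβ : A ≤ (1 / (1 + s)) • (A + B) := by
    rw [one_div, le_inv_smul_iff_of_pos (by positivity), add_smul, one_smul]
    gcongr
  have h := mul_inv_mul_self_add_smul_le (hA.add hB) hα hβ
  rw [← add_div, add_comm s, div_self (by positivity), one_smul, ← le_sub_iff_add_le'] at h
  rw [hmean_eq_two_smul_sub hA hB, amean]
  convert! smul_le_smul_of_nonneg_left h (zero_le_two (α := ℝ)) using 1
  match_scalars <;> field_simp <;> ring

end HarmonicMean

theorem OpAntitone.cfc_hmean_le {g : ℝ → ℝ} (hg : OpAntitone g) {k : Type} [Fintype k]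
    [DecidableEq k] {A B : Matrix k k ℂ} (hA : A.PosDef) (hB : B.PosDef) {s : ℝ} (hs : 0 < s)
    (hAB : s • A ≤ B) (hBA : s • B ≤ A) :
    cfc g (hmean A B) ≤ ((1 + s) ^ 2 / (4 * s)) • amean (cfc g A) (cfc g B) := by
  set d := (1 + s) ^ 2 / (4 * s) with hd
  have hd1 : 1 ≤ d := (one_le_div (by positivity)).2 (by linarith [sq_nonneg (1 - s)])
  have hd0 : 0 < d := zero_lt_one.trans_le hd1
  have hM := amean_posDef hA hB
  have hdM : (d⁻¹ • amean A B).PosDef := hM.smul (inv_pos.2 hd0)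
  calc cfc g (hmean A B)
      ≤ cfc g (d⁻¹ • amean A B) := hg.antitoneOn_cfc hdM (hmean_posDef hA hB) <| by
        simpa [hd, inv_div] using smul_amean_le_hmean hA hB hs.le hAB hBA
    _ ≤ d • cfc g (d • d⁻¹ • amean A B) := hg.cfc_le_smul_cfc_smul hdM hd1
    _ = d • cfc g (amean A B) := by rw [smul_inv_smul₀ hd0.ne']
    _ ≤ d • amean (cfc g A) (cfc g B) := by
        gcongr
        simpa [amean, smul_add] using
          hg.convexOn_cfc.2 hA hB (inv_nonneg.2 zero_le_two) (inv_nonneg.2 zero_le_two)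
            (by norm_num)

theorem one_add_sq_div_le_sqrt_add_sqrt_div_sq {s t : ℝ} (hs : 0 < s) (ht : 0 < t)
    (hst : s * t ≤ 1) : (1 + s) ^ 2 / (4 * s) ≤ ((√s + √t) / (2 * √(s * t))) ^ 2 := by
  have hsqrt : √s * √t ≤ 1 := by simpa [← Real.sqrt_mul hs.le] using hst
  have : 0 < √s := Real.sqrt_pos.2 hs
  have ht' : 0 < √t := Real.sqrt_pos.2 ht
  calc (1 + s) ^ 2 / (4 * s) = ((1 / √s + √s) / 2) ^ 2 := by
        field_simp
        rw [Real.sq_sqrt hs.le]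
        ring
    _ ≤ ((1 / √s + 1 / √t) / 2) ^ 2 := by
        gcongr
        rwa [le_div_iff₀ ht']
    _ = ((√s + √t) / (2 * √(s * t))) ^ 2 := by
        rw [Real.sqrt_mul hs.le]
        field_simp
        ring

theorem polya_szego_antitone_st_le_one {n m : Type} [Fintype n] [DecidableEq n] [Fintype m] [DecidableEq m]
    (Φ : Matrix n n ℂ →ₗ[ℂ] Matrix m m ℂ)
    (hΦ : ∀ X : Matrix n n ℂ, X.PosSemidef → (Φ X).PosSemidef)
    (g : ℝ → ℝ) (hg : OpAntitone g)
    (A B : Matrix n n ℂ) (hA : A.PosDef) (hB : B.PosDef)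
    (s t : ℝ) (hs : 0 < s) (hst : s ≤ t) (h1 : s * t ≤ 1)
    (hsA : LoewnerLE (s • A) B) (htA : LoewnerLE B (t • A)) :
    LoewnerLE (Φ (cfc g (hmean A B)))
      ((((Real.sqrt s + Real.sqrt t) / (2 * Real.sqrt (s * t))) ^ 2) •
        ((2 : ℝ)⁻¹ • (Φ (cfc g A) + Φ (cfc g B)))) := by
  have hsB : s • B ≤ A := calc
    s • B ≤ s • t • A := smul_le_smul_of_nonneg_left htA hs.le
    _ = (s * t) • A := smul_smul s t A
    _ ≤ (1 : ℝ) • A := smul_le_smul_of_nonneg_right h1 hA.posSemidef.nonneg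
    _ = A := one_smul ℝ A
  have hamean_nonneg : 0 ≤ amean (cfc g A) (cfc g B) :=
    smul_nonneg (inv_nonneg.2 zero_le_two) (add_nonneg (hg.cfc_nonneg hA) (hg.cfc_nonneg hB))
  have hle := (hg.cfc_hmean_le hA hB hs hsA hsB).trans <| smul_le_smul_of_nonneg_right
    (one_add_sq_div_le_sqrt_add_sqrt_div_sq hs (hs.trans_le hst) h1) hamean_nonneg
  have hΦle := hΦ _ (le_iff.1 hle)
  rwa [amean, map_sub, LinearMap.map_smul_of_tower, LinearMap.map_smul_of_tower, map_add] at hΦle
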